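/- arXiv:1002.4854 — 2 statements merged into one kernel-verified Lean document; each statement's English description precedes it below -/
import Mathlib

section
/- Let 𝔤 be a finite-dimensional Lie algebra over a field of characteristic 0 whose Killing form is nondegenerate, and let (h,e,f) be an sl₂-triple in 𝔤 such that 𝔤(i) = 0 for every odd integer i. If there exist e', f' ∈ 𝔤 such that (h/2, e', f') is an sl₂-triple, then dim 𝔤^e_nil is an even integer. -/
open LieAlgebra Module

namespace LinearMap.BilinForm

/-- A space carrying a nondegenerate alternating form is even-dimensional. -/
theorem even_finrank_of_isAlt {k V : Type*} [Field k] [CharZero k] [AddCommGroup V] [Module k V]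
    [FiniteDimensional k V] {B : LinearMap.BilinForm k V} (hB : B.IsAlt) (hs : B.SeparatingLeft) :
    Even (finrank k V) := by
  have hdet := (nondegenerate_iff_det_ne_zero (finBasis k V)).mp (.ofSeparatingLeft hs)
  set A := BilinForm.toMatrix (finBasis k V) B
  have hA : A.transpose = -A := by
    ext i j
    simpa [A, BilinForm.toMatrix_apply] using (hB.neg_eq (finBasis k V i) (finBasis k V j)).symm
  by_contra hodd
  have h := congrArg Matrix.det hA
  rw [Matrix.det_transpose, Matrix.det_neg, Fintype.card_fin,
    (Nat.not_even_iff_odd.mp hodd).neg_one_pow, neg_one_mul, self_eq_neg] at h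
  exact hdet h

end LinearMap.BilinForm

namespace IsSl2Triple

open LieModule

variable {k L M : Type*} [Field k] [LieRing L] [LieAlgebra k L]
  [AddCommGroup M] [Module k M] [LieRingModule L M] [LieModule k L M]
  {h e f : L}

theorem mem_genEigenspace_two {μ : k} {v : M} :
    v ∈ (toEnd k L M h).genEigenspace μ 2 ↔ ⁅h, ⁅h, v⁆ - μ • v⁆ = μ • (⁅h, v⁆ - μ • v) := by
  rw [show (2 : ℕ∞) = ((2 : ℕ) : ℕ∞) from rfl, End.mem_genEigenspace_nat, LinearMap.mem_ker,
    pow_two, Module.End.mul_apply]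
  simp [sub_eq_zero]

theorem lie_e_mem_genEigenspace_two (t : IsSl2Triple h e f) {μ : k} {v : M}
    (hv : v ∈ (toEnd k L M h).genEigenspace μ 2) :
    ⁅e, v⁆ ∈ (toEnd k L M h).genEigenspace (μ + 2) 2 := by
  rw [mem_genEigenspace_two] at hv ⊢
  have key : ⁅h, ⁅e, v⁆⁆ - (μ + 2) • ⁅e, v⁆ = ⁅e, ⁅h, v⁆ - μ • v⁆ := by
    rw [leibniz_lie h, t.lie_h_e_smul k, smul_lie, lie_sub, lie_smul]; module
  rw [key, leibniz_lie h, t.lie_h_e_smul k, smul_lie, hv, lie_smul]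
  module

theorem lie_f_mem_genEigenspace_two (t : IsSl2Triple h e f) {μ : k} {v : M}
    (hv : v ∈ (toEnd k L M h).genEigenspace μ 2) :
    ⁅f, v⁆ ∈ (toEnd k L M h).genEigenspace (μ - 2) 2 := by
  rw [mem_genEigenspace_two] at hv ⊢
  have key : ⁅h, ⁅f, v⁆⁆ - (μ - 2) • ⁅f, v⁆ = ⁅f, ⁅h, v⁆ - μ • v⁆ := by
    rw [leibniz_lie h, t.lie_lie_smul_f k, neg_lie, smul_lie, lie_sub, lie_smul]; module
  rw [key, leibniz_lie h, t.lie_lie_smul_f k, neg_lie, smul_lie, hv, lie_smul]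
  module

variable [CharZero k]

theorem lie_h_pow_toEnd_e_apply (t : IsSl2Triple h e f) (v : M) (n : ℕ) :
    ⁅h, (toEnd k L M e ^ n) v⁆ =
      (toEnd k L M e ^ n) ⁅h, v⁆ + (2 * n : k) • (toEnd k L M e ^ n) v := by
  induction n with
  | zero => simp
  | succ n ih =>
    rw [pow_succ', Module.End.mul_apply, Module.End.mul_apply, toEnd_apply_apply, toEnd_apply_apply,
      leibniz_lie h, t.lie_h_e_smul k, smul_lie, ih, lie_add, lie_smul]
    push_cast
    module

theorem lie_h_pow_toEnd_f_apply (t : IsSl2Triple h e f) (v : M) (n : ℕ) :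
    ⁅h, (toEnd k L M f ^ n) v⁆ =
      (toEnd k L M f ^ n) ⁅h, v⁆ - (2 * n : k) • (toEnd k L M f ^ n) v := by
  have := t.symm.lie_h_pow_toEnd_e_apply (k := k) v n
  rw [neg_lie, neg_lie, map_neg] at this
  rw [← neg_inj, this]
  module

theorem pow_succ_toEnd_e_lie_f (t : IsSl2Triple h e f) (v : M) (n : ℕ) :
    (toEnd k L M e ^ (n + 1)) ⁅f, v⁆ = ⁅f, (toEnd k L M e ^ (n + 1)) v⁆ +
      (n + 1 : k) • (⁅h, (toEnd k L M e ^ n) v⁆ - (n : k) • (toEnd k L M e ^ n) v) := by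
  induction n with
  | zero => simp [leibniz_lie e, t.lie_e_f, add_comm]
  | succ n ih =>
    rw [pow_succ' _ (n + 1), Module.End.mul_apply, Module.End.mul_apply, ih, pow_succ' _ n,
      Module.End.mul_apply]
    set w := (toEnd k L M e ^ n) v
    have h1 : ⁅e, ⁅h, w⁆⁆ = ⁅h, ⁅e, w⁆⁆ - (2 : k) • ⁅e, w⁆ := by
      rw [leibniz_lie h, t.lie_h_e_smul k, smul_lie]; abel
    simp only [toEnd_apply_apply, lie_add, lie_smul, lie_sub, leibniz_lie e f, t.lie_e_f, h1]
    push_cast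
    module

theorem lie_e_pow_succ_toEnd_f_apply (t : IsSl2Triple h e f) {v : M} (hv : ⁅e, v⁆ = 0) (n : ℕ) :
    ⁅e, (toEnd k L M f ^ (n + 1)) v⁆ =
      (n + 1 : k) • (toEnd k L M f ^ n) (⁅h, v⁆ - (n : k) • v) := by
  have := t.symm.pow_succ_toEnd_e_lie_f (k := k) v n
  rw [hv, map_zero, neg_lie, t.lie_h_pow_toEnd_f_apply] at this
  rw [eq_neg_of_add_eq_zero_left this.symm, map_sub, map_smul]
  module

theorem exists_pow_toEnd_e_eq_zero [FiniteDimensional k M] (t : IsSl2Triple h e f) {μ : k} {v : M}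
    (hv : ⁅h, v⁆ = μ • v) : ∃ n, (toEnd k L M e ^ n) v = 0 := by
  by_contra! hne
  have hinj : Function.Injective fun n : ℕ ↦ μ + 2 * (n : k) := fun a b hab ↦ by simpa using hab
  refine Set.infinite_range_of_injective hinj
    ((toEnd k L M h).finite_hasEigenvalue.subset ?_)
  rintro _ ⟨n, rfl⟩
  exact End.hasEigenvalue_of_hasEigenvector
    ⟨End.mem_eigenspace_iff.mpr (t.lie_h_pow_toEnd_e hv n), hne n⟩

variable [FiniteDimensional k M]

/-- The operator `e f` is injective on vectors of positive generalized weight. -/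
theorem eq_zero_of_lie_e_lie_f_eq_zero (t : IsSl2Triple h e f) {j : ℕ} {v : M}
    (hv : v ∈ (toEnd k L M h).genEigenspace ((j + 1 : ℕ) : k) 2) (hef : ⁅e, ⁅f, v⁆⁆ = 0) :
    v = 0 := by
  set μ : k := ((j + 1 : ℕ) : k) with hμ
  have hu := mem_genEigenspace_two.mp hv
  set u := ⁅h, v⁆ - μ • v with hu'
  have hpow (n : ℕ) : ⁅h, (toEnd k L M e ^ n) v⁆ =
      (μ + 2 * n) • (toEnd k L M e ^ n) v + (toEnd k L M e ^ n) u := by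
    rw [t.lie_h_pow_toEnd_e_apply, hu', map_sub, map_smul]; module
  have hex : ∃ n, (toEnd k L M e ^ n) v = 0 := by
    obtain ⟨n, hn⟩ := t.exists_pow_toEnd_e_eq_zero hu
    have hn' := hpow n
    rw [hn, add_zero] at hn'
    obtain ⟨m, hm⟩ := t.exists_pow_toEnd_e_eq_zero hn'
    exact ⟨m + n, by rw [pow_add, Module.End.mul_apply, hm]⟩
  by_contra hne
  obtain ⟨n, hn, hn'⟩ := Nat.exists_not_and_succ_of_not_zero_of_exists (p := fun n ↦
    (toEnd k L M e ^ n) v = 0) hne hex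
  have h1 := t.pow_succ_toEnd_e_lie_f (k := k) v n
  rw [hn', lie_zero, zero_add, pow_succ, Module.End.mul_apply, toEnd_apply_apply, hef, map_zero,
    eq_comm, smul_eq_zero_iff_right n.cast_add_one_ne_zero, sub_eq_zero] at h1
  set w := (toEnd k L M e ^ n) v
  have hc : (μ + n : k) ≠ 0 := by rw [hμ]; norm_cast; omega
  have huw : (toEnd k L M e ^ n) u = (-(μ + n)) • w := by
    have := hpow n
    rw [h1] at this
    rw [← sub_eq_iff_eq_add'.mpr this]; module
  have h2 := t.lie_h_pow_toEnd_e hu n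
  rw [huw, lie_smul, h1, ← sub_eq_zero] at h2
  have h3 : ((μ + n) * (μ + n)) • w = 0 := by rw [← h2]; module
  exact hn ((smul_eq_zero_iff_right (mul_ne_zero hc hc)).mp h3)

/-- `h` acts semisimply on the primitive vectors. -/
theorem lie_h_eq_of_lie_e_eq_zero (t : IsSl2Triple h e f) {j : ℕ} {v : M}
    (hv : v ∈ (toEnd k L M h).genEigenspace (j : k) 2) (he : ⁅e, v⁆ = 0) :
    ⁅h, v⁆ = (j : k) • v := by
  have hu := mem_genEigenspace_two.mp hv
  set u := ⁅h, v⁆ - (j : k) • v with hu'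
  by_contra hne
  have hu0 : u ≠ 0 := sub_ne_zero.mpr hne
  have heu : ⁅e, u⁆ = 0 := by
    have := leibniz_lie h e v
    rw [he, lie_zero, t.lie_h_e_smul k, smul_lie, he, smul_zero, zero_add] at this
    rw [hu', lie_sub, ← this, lie_smul, he, smul_zero, sub_zero]
  have P : t.HasPrimitiveVectorWith u (j : k) := ⟨hu0, hu, heu⟩
  have hew := t.lie_e_pow_succ_toEnd_f_apply (k := k) he j
  rw [← hu'] at hew
  have hfu := P.pow_toEnd_f_eq_zero_of_eq_nat rfl
  set w := (toEnd k L M f ^ (j + 1)) v with hw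
  have hhw : ⁅-h, w⁆ = ((j + 1 + 1 : ℕ) : k) • w := by
    rw [neg_lie, hw, t.lie_h_pow_toEnd_f_apply, sub_eq_iff_eq_add'.mp hu'.symm, map_add, map_smul,
      hfu]
    push_cast
    module
  have hw0 : w = 0 := by
    refine t.symm.eq_zero_of_lie_e_lie_f_eq_zero (k := k) (j := j + 1) ?_ ?_
    · rw [mem_genEigenspace_two, hhw]; simp
    · rw [hew, lie_smul, P.lie_f_pow_toEnd_f, hfu, smul_zero]
  rw [hw0, lie_zero, eq_comm, smul_eq_zero_iff_right j.cast_add_one_ne_zero] at hew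
  exact P.pow_toEnd_f_ne_zero_of_eq_nat rfl le_rfl hew

theorem exists_lie_e_lie_f_eq_of_invariant (t : IsSl2Triple h e f) {j : ℕ} {W : Submodule k M}
    (hW : W ≤ (toEnd k L M h).genEigenspace ((j + 1 : ℕ) : k) 2)
    (hinv : ∀ v ∈ W, ⁅e, ⁅f, v⁆⁆ ∈ W) {v : M} (hv : v ∈ W) : ∃ w ∈ W, ⁅e, ⁅f, w⁆⁆ = v := by
  let T : W →ₗ[k] W := (toEnd k L M e ∘ₗ toEnd k L M f).restrict hinv
  have hT : Function.Injective T := by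
    rw [injective_iff_map_eq_zero]
    intro x hx
    exact Subtype.ext (t.eq_zero_of_lie_e_lie_f_eq_zero (hW x.2) (congrArg Subtype.val hx))
  obtain ⟨w, hw⟩ := LinearMap.injective_iff_surjective.mp hT ⟨v, hv⟩
  exact ⟨w, w.2, congrArg Subtype.val hw⟩

/-- `h` acts semisimply on vectors of nonnegative generalized weight. -/
theorem genEigenspace_two_le_eigenspace (t : IsSl2Triple h e f) (j : ℕ) :
    (toEnd k L M h).genEigenspace (j : k) 2 ≤ (toEnd k L M h).eigenspace (j : k) := by
  have hfin : {n : ℕ | (toEnd k L M h).HasEigenvalue (n : k)}.Finite :=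
    (toEnd k L M h).finite_hasEigenvalue.preimage Nat.cast_injective.injOn
  obtain ⟨N, hN⟩ := hfin.bddAbove
  induction hd : N + 1 - j using Nat.strong_induction_on generalizing j with
  | _ d ih =>
  intro v hv
  by_cases hj : N < j
  · have hbot : (toEnd k L M h).eigenspace (j : k) = ⊥ := by
      by_contra hne
      exact absurd (hN (show j ∈ {n : ℕ | (toEnd k L M h).HasEigenvalue (n : k)} from hne))
        (not_le.mpr hj)
    have hu := mem_genEigenspace_two.mp hv
    have : ⁅h, v⁆ - (j : k) • v ∈ (toEnd k L M h).eigenspace (j : k) :=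
      End.mem_eigenspace_iff.mpr hu
    rw [hbot, Submodule.mem_bot, sub_eq_zero] at this
    exact End.mem_eigenspace_iff.mpr this
  · have hcast : ((j + 1 + 1 : ℕ) : k) = j + 2 := by push_cast; ring
    have hev := t.lie_e_mem_genEigenspace_two hv
    rw [← hcast] at hev
    obtain ⟨w, hw, hw'⟩ := t.exists_lie_e_lie_f_eq_of_invariant le_rfl (fun x hx ↦ by
      simpa using t.lie_e_mem_genEigenspace_two (t.lie_f_mem_genEigenspace_two hx)) hev
    have hwe := End.mem_eigenspace_iff.mp (ih _ (by omega) (j + 1 + 1) rfl hw)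
    rw [toEnd_apply_apply, hcast] at hwe
    have hfw : ⁅h, ⁅f, w⁆⁆ = (j : k) • ⁅f, w⁆ := by
      rw [leibniz_lie h, t.lie_lie_smul_f k, neg_lie, smul_lie, hwe, lie_smul]; module
    have hfw' : ⁅f, w⁆ ∈ (toEnd k L M h).genEigenspace (j : k) 2 := by
      rw [mem_genEigenspace_two, hfw]; simp
    have := t.lie_h_eq_of_lie_e_eq_zero (Submodule.sub_mem _ hv hfw')
      (by rw [lie_sub, hw', sub_self])
    rw [lie_sub, hfw, smul_sub, sub_left_inj] at this
    exact End.mem_eigenspace_iff.mpr this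

theorem isCompl_eigenspace_range (t : IsSl2Triple h e f) (j : ℕ) :
    IsCompl ((toEnd k L M h).eigenspace (j : k))
      (LinearMap.range (toEnd k L M h - (j : k) • 1)) := by
  rw [End.eigenspace_def]
  refine (Submodule.isCompl_iff_disjoint _ _ ?_).mpr ?_
  · rw [add_comm, LinearMap.finrank_range_add_finrank_ker]
  · rw [Submodule.disjoint_def]
    rintro _ hx ⟨y, rfl⟩
    have hy : y ∈ (toEnd k L M h).genEigenspace (j : k) 2 := by
      rw [mem_genEigenspace_two]
      simpa [sub_eq_zero] using hx
    have := t.genEigenspace_two_le_eigenspace j hy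
    rwa [End.eigenspace_def] at this

theorem map_toEnd_e_eigenspace (t : IsSl2Triple h e f) {i : ℤ} (hi : 1 ≤ i) :
    ((toEnd k L M h).eigenspace (i : k)).map (toEnd k L M e) =
      (toEnd k L M h).eigenspace ((i + 2 : ℤ) : k) := by
  have he {x : M} {ν : k} (hx : x ∈ (toEnd k L M h).eigenspace ν) :
      ⁅e, x⁆ ∈ (toEnd k L M h).eigenspace (ν + 2) := by
    rw [End.mem_eigenspace_iff, toEnd_apply_apply] at hx ⊢
    rw [leibniz_lie h, hx, t.lie_h_e_smul k, smul_lie, lie_smul]; module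
  have hf {x : M} {ν : k} (hx : x ∈ (toEnd k L M h).eigenspace ν) :
      ⁅f, x⁆ ∈ (toEnd k L M h).eigenspace (ν - 2) := by
    rw [End.mem_eigenspace_iff, toEnd_apply_apply] at hx ⊢
    rw [leibniz_lie h, hx, t.lie_lie_smul_f k, neg_lie, smul_lie, lie_smul]; module
  apply le_antisymm
  · rintro _ ⟨x, hx, rfl⟩
    push_cast
    exact he hx
  · intro x hx
    lift i to ℕ using by omega
    have hcast : (((i : ℤ) + 2 : ℤ) : k) = ((i + 1 + 1 : ℕ) : k) := by push_cast; ring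
    rw [hcast] at hx
    obtain ⟨w, hw, rfl⟩ := t.exists_lie_e_lie_f_eq_of_invariant
      (End.genEigenspace _ _ |>.monotone (by norm_num))
      (fun y hy ↦ by simpa using he (hf hy)) hx
    refine ⟨⁅f, w⁆, ?_, rfl⟩
    have := hf hw
    have hc : ((i + 1 + 1 : ℕ) : k) - 2 = ((i : ℤ) : k) := by push_cast; ring
    rwa [hc] at this

/-- When the odd weights vanish, `ker e` meets the sum of the positive weight spaces in a space of
the dimension of the weight space of weight `2`. -/
theorem finrank_ker_inf_iSup_eigenspace (t : IsSl2Triple h e f)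
    (h1 : (toEnd k L M h).eigenspace (1 : k) = ⊥) :
    finrank k (LinearMap.ker (toEnd k L M e) ⊓
      ⨆ i ∈ Set.Ici (1 : ℤ), (toEnd k L M h).eigenspace (i : k) : Submodule k M) =
      finrank k ((toEnd k L M h).eigenspace (2 : k)) := by
  set V : ℤ → Submodule k M := fun i ↦ (toEnd k L M h).eigenspace (i : k) with hV
  have hind : iSupIndep V := (toEnd k L M h).eigenspaces_iSupIndep.comp Int.cast_injective
  set P : Submodule k M := ⨆ i ∈ Set.Ici (1 : ℤ), V i
  set Q : Submodule k M := ⨆ i ∈ Set.Ici (3 : ℤ), V i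
  have hmap : P.map (toEnd k L M e) = Q := by
    simp only [P, Q, Submodule.map_iSup]
    apply le_antisymm
    · refine iSup₂_le fun i hi ↦ ?_
      rw [t.map_toEnd_e_eigenspace hi]
      exact le_iSup₂_of_le (i + 2) (by simp only [Set.mem_Ici] at *; omega) le_rfl
    · refine iSup₂_le fun i hi ↦ ?_
      have hi' : 1 ≤ i - 2 := by simp only [Set.mem_Ici] at hi; omega
      refine le_iSup₂_of_le (i - 2) hi' ?_
      rw [t.map_toEnd_e_eigenspace hi', sub_add_cancel]
  have hsup : V 2 ⊔ Q = P := by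
    apply le_antisymm
    · refine sup_le (le_iSup₂_of_le 2 (by simp) le_rfl) (iSup₂_le fun i hi ↦ ?_)
      exact le_iSup₂_of_le i (by simp only [Set.mem_Ici] at *; omega) le_rfl
    · refine iSup₂_le fun i hi ↦ ?_
      rcases (show i = 1 ∨ i = 2 ∨ 3 ≤ i by simp only [Set.mem_Ici] at hi; omega) with
        rfl | rfl | hi
      · simp [hV, h1]
      · exact le_sup_left
      · exact le_sup_of_le_right (le_iSup₂_of_le i hi le_rfl)
  have hdisj : Disjoint (V 2) Q := hind.disjoint_biSup (by simp)
  have hrank := Submodule.finrank_sup_add_finrank_inf_eq (V 2) Q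
  rw [hsup, hdisj.eq_bot, finrank_bot, add_zero] at hrank
  have hnull := ((toEnd k L M e).domRestrict P).finrank_range_add_finrank_ker
  rw [LinearMap.range_domRestrict, hmap, LinearMap.ker_domRestrict] at hnull
  have hker : finrank k (Submodule.comap P.subtype (LinearMap.ker (toEnd k L M e))) =
      finrank k (LinearMap.ker (toEnd k L M e) ⊓ P : Submodule k M) := by
    rw [← Submodule.finrank_map_subtype_eq, Submodule.map_comap_subtype, inf_comm]
  have hV2 : V 2 = (toEnd k L M h).eigenspace (2 : k) := by simp [hV]
  rw [← hV2]
  omega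

end IsSl2Triple

/-- The weight-one space of an `sl₂`-triple in a Lie algebra with nondegenerate Killing form is
even-dimensional: `(x, y) ↦ κ(⁅f, x⁆, y)` is a symplectic form on it. -/
theorem IsSl2Triple.even_finrank_eigenspace_one {k L : Type*} [Field k] [CharZero k] [LieRing L]
    [LieAlgebra k L] [FiniteDimensional k L] (hκ : (killingForm k L).Nondegenerate) {h e f : L}
    (t : IsSl2Triple h e f) : Even (finrank k ((ad k L h).eigenspace (1 : k))) := by
  set V := (ad k L h).eigenspace (1 : k)
  let B : LinearMap.BilinForm k V :=
    ((killingForm k L).compl₁₂ (ad k L f ∘ₗ V.subtype) V.subtype)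
  have hB (x y : V) : B x y = killingForm k L ⁅f, (x : L)⁆ y := rfl
  refine LinearMap.BilinForm.even_finrank_of_isAlt (B := B) (fun x ↦ ?_) fun x hx ↦ ?_
  · rw [hB, LieModule.traceForm_apply_lie_apply, lie_self, map_zero]
  have hxh : ⁅h, (x : L)⁆ = (1 : k) • (x : L) := End.mem_eigenspace_iff.mp x.2
  have hz : ⁅⁅f, (x : L)⁆, h⁆ = ⁅f, (x : L)⁆ := by
    rw [← lie_skew, leibniz_lie h, t.lie_lie_smul_f k, neg_lie, smul_lie, hxh, lie_smul]
    module
  have hfx : ⁅f, (x : L)⁆ = 0 := by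
    refine hκ.1 _ fun w ↦ ?_
    have hw : w ∈ V ⊔ LinearMap.range (ad k L h - (1 : k) • 1) := by
      have := (t.isCompl_eigenspace_range (k := k) (M := L) 1).sup_eq_top
      rw [Nat.cast_one] at this
      exact this ▸ Submodule.mem_top
    obtain ⟨y, hy, _, ⟨w', rfl⟩, rfl⟩ := Submodule.mem_sup.mp hw
    have h1 : killingForm k L ⁅f, (x : L)⁆ y = 0 := hx ⟨y, hy⟩
    have h2 : killingForm k L ⁅f, (x : L)⁆ ⁅h, w'⁆ = killingForm k L ⁅f, (x : L)⁆ w' := by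
      rw [← LieModule.traceForm_apply_lie_apply, hz]
    simp [h1, h2]
  refine Subtype.ext (t.eq_zero_of_lie_e_lie_f_eq_zero (k := k) (j := 0) ?_ (by rw [hfx, lie_zero]))
  rw [mem_genEigenspace_two, hxh]
  simp

/-- If the Killing form of a finite-dimensional char-0 Lie algebra is nondegenerate,
`(h,e,f)` is an sl₂-triple with `e` even, and `(h/2, e', f')` is also an sl₂-triple,
then `dim 𝔤^e_nil` is even. -/
theorem stmt_2 {k : Type*} [Field k] [CharZero k]
    {L : Type*} [LieRing L] [LieAlgebra k L] [FiniteDimensional k L]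
    (hKilling : (killingForm k L).Nondegenerate)
    {h e f : L} (ht : IsSl2Triple h e f)
    (heven : ∀ i : ℤ, Odd i → (ad k L h).eigenspace ((i : ℤ) : k) = ⊥)
    (hdiv : ∃ e' f' : L, IsSl2Triple ((2⁻¹ : k) • h) e' f') :
    Even (Module.finrank k ((LinearMap.ker (ad k L e) ⊓
      ⨆ i ∈ Set.Ici (1 : ℤ), (ad k L h).eigenspace ((i : ℤ) : k) : Submodule k L))) := by
  obtain ⟨e', f', ht'⟩ := hdiv
  have h1 : (ad k L h).eigenspace (1 : k) = ⊥ := by simpa using heven 1 odd_one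
  have h2 : (ad k L ((2⁻¹ : k) • h)).eigenspace (1 : k) = (ad k L h).eigenspace (2 : k) := by
    ext x
    simp only [End.mem_eigenspace_iff, ad_apply, smul_lie, one_smul]
    exact inv_smul_eq_iff₀ two_ne_zero
  have heq := ht.finrank_ker_inf_iSup_eigenspace (k := k) (M := L) h1
  have hpar := ht'.even_finrank_eigenspace_one hKilling
  rw [h2] at hpar
  exact heq ▸ hpar
end

section
/- Let 𝔤 be a finite-dimensional Lie algebra over a field of characteristic 0 and let (h,e,f) and (h/2, e', f') both be sl₂-triples in 𝔤. Then ad e and ad e' are nilpotent, and if N denotes the largest integer m ≥ 0 with (ad e)^m ≠ 0 and N' denotes the largest integer m ≥ 0 with (ad e')^m ≠ 0, then N = 2·N'. (The height of e' equals half the height of e.) -/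
open LieAlgebra Module

namespace IsSl2Triple

section Module

variable {k L M : Type*} [Field k] [LieRing L] [LieAlgebra k L]
  [AddCommGroup M] [Module k M] [LieRingModule L M] [LieModule k L M] {h e f : L}

open LieModule

lemma toEnd_h_mul_pow_toEnd_e (t : IsSl2Triple h e f) (n : ℕ) :
    toEnd k L M h * toEnd k L M e ^ n =
      toEnd k L M e ^ n * toEnd k L M h + (2 * n : k) • toEnd k L M e ^ n := by
  have hHE : toEnd k L M h * toEnd k L M e =
      toEnd k L M e * toEnd k L M h + (2 : k) • toEnd k L M e := by
    ext m
    simp [leibniz_lie h e m, t.lie_h_e_smul k, add_comm]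
  induction n with
  | zero => simp
  | succ n ih =>
    rw [pow_succ, ← mul_assoc, ih, add_mul, mul_assoc, hHE, mul_add, smul_mul_assoc,
      mul_smul_comm, mul_assoc, add_assoc, ← add_smul]
    congr 2
    push_cast
    ring

lemma isNilpotent_toEnd_e [CharZero k] [FiniteDimensional k M] (t : IsSl2Triple h e f) :
    IsNilpotent (toEnd k L M e) := by
  by_contra contra
  have hne (n : ℕ) : toEnd k L M e ^ n ≠ 0 := fun hn ↦ contra ⟨n, hn⟩
  let T : End k (End k M) :=
    LinearMap.mulLeft k (toEnd k L M h) - LinearMap.mulRight k (toEnd k L M h)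
  have hT (n : ℕ) : T.HasEigenvector (2 * n : k) (toEnd k L M e ^ n) := by
    refine ⟨?_, hne n⟩
    rw [End.mem_eigenspace_iff]
    simp [T, t.toEnd_h_mul_pow_toEnd_e n]
  have hinj : Function.Injective (fun n : ℕ ↦ (2 * n : k)) := fun a b hab ↦ by simpa using hab
  have := (T.eigenvectors_linearIndependent' _ hinj _ hT).finite
  exact not_finite ℕ

lemma pow_succ_toEnd_e_mul_toEnd_f (t : IsSl2Triple h e f) (n : ℕ) :
    toEnd k L M e ^ (n + 1) * toEnd k L M f = toEnd k L M f * toEnd k L M e ^ (n + 1) +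
      (n + 1 : k) • (toEnd k L M h * toEnd k L M e ^ n - (n : k) • toEnd k L M e ^ n) := by
  have hEF : toEnd k L M e * toEnd k L M f =
      toEnd k L M f * toEnd k L M e + toEnd k L M h := by
    ext m
    simp [leibniz_lie e f m, t.lie_e_f, add_comm]
  have hEH : toEnd k L M e * toEnd k L M h =
      toEnd k L M h * toEnd k L M e - (2 : k) • toEnd k L M e := by
    simpa using (eq_sub_of_add_eq (t.toEnd_h_mul_pow_toEnd_e (k := k) (M := M) 1).symm)
  induction n with
  | zero => simpa using hEF
  | succ n ih =>
    rw [pow_succ' _ (n + 1), mul_assoc, ih, mul_add, ← mul_assoc, hEF, mul_smul_comm, mul_sub,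
      ← mul_assoc, hEH, mul_smul_comm, ← pow_succ', sub_mul, mul_assoc, smul_mul_assoc,
      ← pow_succ', add_mul, mul_assoc]
    push_cast
    module

/-- If `N` is the largest exponent with `e ^ N ≠ 0`, then `N` is an eigenvalue of `h`. -/
lemma exists_lie_h_eq_of_pow_toEnd_e [CharZero k] (t : IsSl2Triple h e f) {N : ℕ}
    (hN : toEnd k L M e ^ N ≠ 0) (hN' : toEnd k L M e ^ (N + 1) = 0) :
    ∃ m : M, m ≠ 0 ∧ ⁅h, m⁆ = (N : k) • m := by
  obtain ⟨x, hx⟩ := DFunLike.ne_iff.mp hN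
  refine ⟨_, hx, ?_⟩
  have hc := t.pow_succ_toEnd_e_mul_toEnd_f (k := k) (M := M) N
  rw [hN', zero_mul, mul_zero, zero_add, eq_comm, smul_eq_zero_iff_right N.cast_add_one_ne_zero,
    sub_eq_zero] at hc
  simpa using LinearMap.congr_fun hc x

lemma HasPrimitiveVectorWith.pow_toEnd_e_pow_toEnd_f_ne_zero [CharZero k]
    {t : IsSl2Triple h e f} {m : M} {n : ℕ} (P : t.HasPrimitiveVectorWith m (n : k)) {i : ℕ}
    (hi : i ≤ n) : (toEnd k L M e ^ i) ((toEnd k L M f ^ i) m) ≠ 0 := by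
  induction i with
  | zero => simpa using P.ne_zero
  | succ i ih =>
    rw [pow_succ, End.mul_apply, toEnd_apply_apply, P.lie_e_pow_succ_toEnd_f, map_smul]
    refine smul_ne_zero (mul_ne_zero i.cast_add_one_ne_zero ?_) (ih (by lia))
    exact sub_ne_zero.mpr (Nat.cast_injective.ne (by lia))

/-- If `e ^ (N + 1) = 0`, then each eigenvalue `μ` of `h` is an integer bounded above by `N`. -/
lemma exists_nat_le_of_lie_h_eq [CharZero k] [FiniteDimensional k M] (t : IsSl2Triple h e f)
    {N : ℕ} (hN : toEnd k L M e ^ (N + 1) = 0) {m : M} (hm : m ≠ 0) {μ : k}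
    (hμ : ⁅h, m⁆ = μ • m) : ∃ j w : ℕ, μ + 2 * j = w ∧ w ≤ N := by
  obtain ⟨j, hj, hj'⟩ := Nat.exists_not_and_succ_of_not_zero_of_exists
    (p := fun n ↦ (toEnd k L M e ^ n) m = 0) (by simpa using hm) ⟨N + 1, by simp [hN]⟩
  have P : t.HasPrimitiveVectorWith ((toEnd k L M e ^ j) m) (μ + 2 * j) :=
    ⟨hj, t.lie_h_pow_toEnd_e hμ j, by rwa [lie_e_pow_toEnd_e j]⟩
  obtain ⟨w, hw⟩ := P.exists_nat
  refine ⟨j, w, hw, ?_⟩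
  by_contra! hlt
  rw [hw] at P
  exact P.pow_toEnd_e_pow_toEnd_f_ne_zero le_rfl (by simp [pow_eq_zero_of_le hlt hN])

end Module

end IsSl2Triple

/-- If `(h,e,f)` and `(h/2,e',f')` are both sl₂-triples in a finite-dimensional char-0
Lie algebra, then `ad e` and `ad e'` are nilpotent and the height of `e` is twice the
height of `e'`. -/
theorem stmt_7 {k : Type*} [Field k] [CharZero k]
    {L : Type*} [LieRing L] [LieAlgebra k L] [FiniteDimensional k L]
    {h e f e' f' : L} (ht : IsSl2Triple h e f)
    (ht' : IsSl2Triple ((2⁻¹ : k) • h) e' f') :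
    IsNilpotent (ad k L e) ∧ IsNilpotent (ad k L e') ∧
    ∀ N N' : ℕ, (ad k L e) ^ N ≠ 0 → (ad k L e) ^ (N + 1) = 0 →
      (ad k L e') ^ N' ≠ 0 → (ad k L e') ^ (N' + 1) = 0 → N = 2 * N' := by
  refine ⟨ht.isNilpotent_toEnd_e, ht'.isNilpotent_toEnd_e, fun N N' hN hN₁ hN' hN₁' ↦ ?_⟩
  apply le_antisymm
  · obtain ⟨m, hm, hhm⟩ := ht.exists_lie_h_eq_of_pow_toEnd_e hN hN₁
    obtain ⟨j, w, hw, hwN⟩ := ht'.exists_nat_le_of_lie_h_eq hN₁' hm (μ := 2⁻¹ * (N : k))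
      (by rw [smul_lie, hhm, smul_smul])
    have : N + 4 * j = 2 * w := by
      rw [← Nat.cast_inj (R := k)]
      push_cast
      linear_combination 2 * hw
    lia
  · obtain ⟨m, hm, hhm⟩ := ht'.exists_lie_h_eq_of_pow_toEnd_e hN' hN₁'
    obtain ⟨j, w, hw, hwN⟩ := ht.exists_nat_le_of_lie_h_eq hN₁ hm (μ := 2 * (N' : k))
      (by rw [mul_smul, ← hhm, smul_lie, smul_inv_smul₀ two_ne_zero])
    have : 2 * N' + 2 * j = w := by exact_mod_cast hw
    lia
end
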